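/- Let G be the m × n rectangular grid graph with m, n ≥ 3, and let e = uv be an edge with deg(u) = deg(v) = 3 (both endpoints are non-corner boundary vertices). Then meg(G \ {e}) = meg(G) = 2(m + n − 2). -/

import Mathlib

open SimpleGraph

variable {V : Type*}

/-- A pair of vertices `u, v` monitors edge `e` in `G` if `u` and `v` are connected
and `e` lies on every shortest path (walk of length `G.dist u v`) between them. -/
def monitors (G : SimpleGraph V) (u v : V) (e : Sym2 V) : Prop :=
  G.Reachable u v ∧ ∀ p : G.Walk u v, p.length = G.dist u v → e ∈ p.edges

/-- `M` is a monitoring edge-geodetic set of `G`. -/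
def IsMEGSet (G : SimpleGraph V) (M : Set V) : Prop :=
  ∀ e ∈ G.edgeSet, ∃ u ∈ M, ∃ v ∈ M, monitors G u v e

/-- The monitoring edge-geodetic number: minimum size of an MEG-set. -/
noncomputable def meg (G : SimpleGraph V) : ℕ :=
  sInf {n | ∃ M : Finset V, IsMEGSet G ↑M ∧ M.card = n}

/-!
Let `a` be a leaf of `G` with neighbour `c`. In `G □ H` the squares `(a, b), (a, d), (c, d), (c, b)`
reroute every geodesic that uses the rung `(a, b)(c, b)` and continues past `(a, b)`, so only pairs
containing `(a, b)` monitor this rung. Hence an MEG-set contains every vertex with a leaf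
coordinate. Conversely, if the leaves of `G` and of `H` are MEG-sets, these vertices monitor
everything: a row over a non-leaf inherits the geodesics of `G`, likewise for columns, and any other
edge lies within the boundary and is monitored by its own endpoints. Both arguments survive the
deletion of edges that join two non-corner boundary vertices: as no two leaves are adjacent, no
such edge is a rung or lies in an inner row or column.
-/

section Monitoring

variable {G : SimpleGraph V} {a b v w : V}

theorem monitors.symm {e : Sym2 V} (h : monitors G a b e) : monitors G b a e :=
  ⟨h.1.symm, fun p hp ↦ by
    simpa using h.2 p.reverse (by rw [Walk.length_reverse, hp, dist_comm])⟩

theorem monitors_of_adj (h : G.Adj a b) : monitors G a b s(a, b) := by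
  refine ⟨h.reachable, fun p hp ↦ ?_⟩
  rw [dist_eq_one_iff_adj.2 h] at hp
  refine p.mk_mem_edges_iff_exists.2 ⟨0, by lia, ?_⟩
  rw [zero_add, ← hp, p.getVert_zero, p.getVert_length]

theorem monitors.of_iso {W : Type*} {G' : SimpleGraph W} (φ : G ≃g G') {e : Sym2 V}
    (h : monitors G' (φ a) (φ b) (e.map φ)) : monitors G a b e := by
  obtain ⟨q, hq⟩ := h.1.exists_walk_length_eq_dist
  have hdist : G.dist a b ≤ G'.dist (φ a) (φ b) := by
    simpa [hq] using dist_le (q.map φ.symm.toHom)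
  refine ⟨φ.reachable_iff.1 h.1, fun p hp ↦ ?_⟩
  have hmem := h.2 (p.map φ.toHom) (le_antisymm (by simpa [hp] using hdist) (dist_le _))
  rw [Walk.edges_map] at hmem
  exact (List.mem_map_of_injective (Sym2.map.injective φ.injective)).1 hmem

theorem IsMEGSet.mono {M N : Set V} (hM : IsMEGSet G M) (hMN : M ⊆ N) : IsMEGSet G N := fun e he ↦
  let ⟨u, hu, v, hv, h⟩ := hM e he
  ⟨u, hMN hu, v, hMN hv, h⟩

theorem IsMEGSet.preimage_iso {W : Type*} {G' : SimpleGraph W} (φ : G ≃g G') {M : Set W}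
    (hM : IsMEGSet G' M) : IsMEGSet G (φ ⁻¹' M) := by
  intro e he
  obtain ⟨u, hu, v, hv, h⟩ := hM (e.map φ) ((Hom.mapEdgeSet φ.toHom ⟨e, he⟩).2)
  obtain ⟨a, rfl⟩ := φ.surjective u
  obtain ⟨b, rfl⟩ := φ.surjective v
  exact ⟨a, hu, b, hv, h.of_iso φ⟩

theorem monitors.eq_left_of_append (h : monitors G a b s(v, w)) (hvw : G.Adj v w)
    (hsquare : ∀ t, G.Adj v t → t ≠ w → ∃ y ≠ v, G.Adj t y ∧ G.Adj y w)
    (q : G.Walk a v) (r : G.Walk w b)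
    (hlen : (q.append (.cons hvw r)).length = G.dist a b) : v = a := by
  by_contra hva
  obtain ⟨t, q', htv, rfl⟩ : ∃ (t : V) (q' : G.Walk a t) (htv : G.Adj t v), q = q'.concat htv :=
    ⟨_, _, q.adj_penultimate (Walk.not_nil_of_ne (Ne.symm hva)), (Walk.concat_dropLast _).symm⟩
  have hnodup : (q'.support ++ v :: r.support).Nodup := by
    simpa [Walk.support_append] using (Walk.isPath_of_length_eq_dist _ hlen).support_nodup
  obtain ⟨hvq', hvr⟩ : v ∉ q'.support ∧ v ∉ r.support := by grind
  have htw : t ≠ w := by grind [q'.end_mem_support, r.start_mem_support]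
  obtain ⟨y, hyv, hty, hyw⟩ := hsquare t htv.symm htw
  have hvw_mem := h.2 ((q'.concat hty).append (.cons hyw r)) (by simpa using hlen)
  have hv_mem : v ∈ q'.support ++ y :: r.support := by
    simpa [Walk.support_append] using Walk.fst_mem_support_of_mem_edges _ hvw_mem
  grind

theorem monitors.eq_or_eq_of_squares (h : monitors G a b s(v, w))
    (hsquare : ∀ t, G.Adj v t → t ≠ w → ∃ y ≠ v, G.Adj t y ∧ G.Adj y w) : v = a ∨ v = b := by
  obtain ⟨p, hp⟩ := h.1.exists_walk_length_eq_dist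
  have hvw := p.adj_of_mem_edges (h.2 p hp)
  rcases (Walk.isSubwalk_toWalk_iff_mem_edges hvw).2 (h.2 p hp) with ⟨q, r, rfl⟩ | ⟨q, r, rfl⟩
  · refine .inl (h.eq_left_of_append hvw hsquare q r ?_)
    simp only [← hp, Walk.length_append, Walk.length_cons, Walk.length_nil]
    lia
  · refine .inr (h.symm.eq_left_of_append hvw hsquare r.reverse q.reverse ?_)
    simp only [dist_comm, ← hp, Walk.length_append, Walk.length_cons, Walk.length_nil,
      Walk.length_reverse]
    lia

theorem IsMEGSet.mem_of_squares {M : Set V} (hM : IsMEGSet G M) (hvw : G.Adj v w)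
    (hsquare : ∀ t, G.Adj v t → t ≠ w → ∃ y ≠ v, G.Adj t y ∧ G.Adj y w) : v ∈ M := by
  obtain ⟨a, ha, b, hb, h⟩ := hM s(v, w) hvw
  rcases h.eq_or_eq_of_squares hsquare with rfl | rfl <;> assumption

theorem meg_eq_ncard_of_forall_isMEGSet_iff [Finite V] {B : Set V}
    (hB : ∀ M : Set V, IsMEGSet G M ↔ B ⊆ M) : meg G = B.ncard := by
  refine IsLeast.csInf_eq ⟨⟨B.toFinite.toFinset, ?_, ?_⟩, ?_⟩
  · rw [Set.Finite.coe_toFinset, hB]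
  · exact (Set.ncard_eq_toFinset_card B).symm
  · rintro _ ⟨M, hM, rfl⟩
    rw [← Set.ncard_coe_finset]
    exact Set.ncard_le_ncard ((hB M).1 hM)

end Monitoring

section BoxProd

variable {α β : Type*} {G : SimpleGraph α} {H : SimpleGraph β}

theorem edges_eq_map_edges_ofBoxProdLeft [DecidableEq α] [DecidableEq β]
    [DecidableRel G.Adj] [DecidableRel H.Adj] {x y : α × β} (p : (G □ H).Walk x y)
    (hp : p.ofBoxProdRight.length = 0) :
    p.edges = p.ofBoxProdLeft.edges.map (Sym2.map (·, x.2)) := by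
  induction p with
  | nil => rfl
  | @cons x z y h p ih =>
    obtain ⟨a, b⟩ := x
    obtain ⟨c, d⟩ := z
    rcases boxProd_adj.1 h with ⟨hac, rfl⟩ | ⟨hbd, rfl⟩
    · simp_all [Walk.ofBoxProdLeft, Walk.ofBoxProdRight, Or.by_cases]
    · simp_all [Walk.ofBoxProdRight, Or.by_cases]

variable {K : SimpleGraph (α × β)}

theorem monitors.map_prodMk_left {a a' : α} {e : Sym2 α} (h : monitors G a a' e)
    (hK : K ≤ G □ H) {b : β} (hrow : ∀ ⦃x y⦄, G.Adj x y → K.Adj (x, b) (y, b)) :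
    monitors K (a, b) (a', b) (e.map (·, b)) := by
  classical
  let row : G →g K := ⟨(·, b), @hrow⟩
  obtain ⟨r, hr⟩ := h.1.exists_walk_length_eq_dist
  refine ⟨⟨r.map row⟩, fun p hp ↦ ?_⟩
  let p' := p.mapLe hK
  have hp' : p'.ofBoxProdLeft.length + p'.ofBoxProdRight.length ≤ G.dist a a' :=
    calc
      _ = p.length := by rw [← Walk.length_boxProd, Walk.length_mapLe]
      _ ≤ (r.map row).length := hp ▸ dist_le _
      _ = G.dist a a' := by rw [Walk.length_map, hr]
  have hdist : G.dist a a' ≤ p'.ofBoxProdLeft.length := dist_le _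
  rw [← p.edges_mapLe_eq_edges hK, edges_eq_map_edges_ofBoxProdLeft _ (by lia)]
  exact List.mem_map_of_mem (h.2 _ (by lia))

/-- The vertices of degree one. -/
def leaves (G : SimpleGraph α) : Set α :=
  {a | (G.neighborSet a).ncard = 1}

/-- The vertices of `G □ H` having a leaf coordinate; for two path graphs, the outer cycle of the
grid. -/
def boundary (G : SimpleGraph α) (H : SimpleGraph β) : Set (α × β) :=
  {x | x.1 ∈ leaves G ∨ x.2 ∈ leaves H}

/-- The boundary vertices of `G □ H` that are not corners, a corner being a pair of leaves. -/
def sides (G : SimpleGraph α) (H : SimpleGraph β) : Set (α × β) :=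
  {x | Xor (x.1 ∈ leaves G) (x.2 ∈ leaves H)}

/-- `K` arises from `G □ H` by deleting only edges that join two vertices of `sides G H`. As `K.Adj`
is symmetric, it is enough to say that an edge whose first endpoint lies off the sides survives. -/
structure IsSideDeletion (G : SimpleGraph α) (H : SimpleGraph β) (K : SimpleGraph (α × β)) :
    Prop where
  le : K ≤ G □ H
  adj_of_notMem_sides : ∀ ⦃x y⦄, (G □ H).Adj x y → x ∉ sides G H → K.Adj x y

namespace IsSideDeletion

theorem swap (h : IsSideDeletion G H K) : IsSideDeletion H G (K.comap (Equiv.prodComm β α)) where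
  le _ _ hxy := (boxProdComm G H).map_adj_iff.2 (h.le hxy)
  adj_of_notMem_sides _ _ hxy hx :=
    h.adj_of_notMem_sides ((boxProdComm H G).map_adj_iff.2 hxy)
      (by rwa [sides, Set.mem_ofPred_eq, xor_comm])

theorem adj_left (h : IsSideDeletion G H K) (hG : G.IsIndepSet (leaves G)) {a a' : α} {b : β}
    (haa' : G.Adj a a') (hb : b ∈ leaves H → a ∈ leaves G ∨ a' ∈ leaves G) :
    K.Adj (a, b) (a', b) := by
  have hadj : (G □ H).Adj (a, b) (a', b) := boxProd_adj_left.2 haa'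
  have hnot : ¬ (a ∈ leaves G ∧ a' ∈ leaves G) := fun hl ↦ hG hl.1 hl.2 haa'.ne haa'
  by_cases hside : (a, b) ∈ sides G H
  · refine (h.adj_of_notMem_sides hadj.symm ?_).symm
    grind [sides, Xor]
  · exact h.adj_of_notMem_sides hadj hside

theorem adj_right (h : IsSideDeletion G H K) (hH : H.IsIndepSet (leaves H)) {a : α} {b b' : β}
    (hbb' : H.Adj b b') (ha : a ∈ leaves G → b ∈ leaves H ∨ b' ∈ leaves H) :
    K.Adj (a, b) (a, b') :=
  h.swap.adj_left hH hbb' ha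

theorem mem_of_isMEGSet_of_fst_mem_leaves (h : IsSideDeletion G H K)
    (hG : G.IsIndepSet (leaves G)) (hH : H.IsIndepSet (leaves H)) {M : Set (α × β)}
    (hM : IsMEGSet K M) {a : α} (ha : a ∈ leaves G) (b : β) : (a, b) ∈ M := by
  obtain ⟨c, hc⟩ := Set.ncard_eq_one.1 ha
  have hac : G.Adj a c := by simp [← mem_neighborSet, hc]
  have hcG : c ∉ leaves G := fun hc' ↦ hG ha hc' hac.ne hac
  have hrung (d : β) : K.Adj (a, d) (c, d) := h.adj_left hG hac fun _ ↦ .inl ha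
  refine hM.mem_of_squares (hrung b) ?_
  rintro ⟨a', d⟩ hadj hne
  rcases boxProd_adj.1 (h.le hadj) with ⟨haa', rfl⟩ | ⟨hbd, rfl⟩
  · have : a' = c := by simpa [hc] using (G.mem_neighborSet a a').2 haa'
    exact absurd (by rw [this]) hne
  · refine ⟨(c, d), fun heq ↦ hac.ne' (Prod.ext_iff.1 heq).1, hrung d, ?_⟩
    exact (h.adj_right hH hbd fun hc' ↦ absurd hc' hcG).symm

theorem exists_monitors_row (h : IsSideDeletion G H K) (hG : G.IsIndepSet (leaves G))
    (hMEG : IsMEGSet G (leaves G)) {a a' : α} {b : β} (hadj : K.Adj (a, b) (a', b)) :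
    ∃ u ∈ boundary G H, ∃ v ∈ boundary G H, monitors K u v s((a, b), (a', b)) := by
  by_cases hb : b ∈ leaves H
  · exact ⟨_, .inr hb, _, .inr hb, monitors_of_adj hadj⟩
  · obtain ⟨u, hu, v, hv, huv⟩ := hMEG s(a, a') (boxProd_adj_left.1 (h.le hadj))
    have hrow ⦃x y : α⦄ (hxy : G.Adj x y) : K.Adj (x, b) (y, b) :=
      h.adj_left hG hxy fun hb' ↦ absurd hb' hb
    exact ⟨(u, b), .inl hu, (v, b), .inl hv, huv.map_prodMk_left h.le hrow⟩

theorem isMEGSet_boundary (h : IsSideDeletion G H K) (hG : G.IsIndepSet (leaves G))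
    (hH : H.IsIndepSet (leaves H)) (hMEG : IsMEGSet G (leaves G)) (hMEH : IsMEGSet H (leaves H)) :
    IsMEGSet K (boundary G H) := by
  rintro ⟨⟨a, b⟩, c, d⟩ hadj
  rcases boxProd_adj.1 (h.le hadj) with ⟨-, hbd⟩ | ⟨-, hac⟩
  · obtain rfl : b = d := hbd
    exact h.exists_monitors_row hG hMEG hadj
  · obtain rfl : a = c := hac
    obtain ⟨u, hu, v, hv, huv⟩ := h.swap.exists_monitors_row hH hMEH hadj
    exact ⟨u.swap, hu.symm, v.swap, hv.symm,
      monitors.of_iso (e := s((a, b), (a, d))) (Iso.comap (Equiv.prodComm β α) K).symm huv⟩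

theorem isMEGSet_iff (h : IsSideDeletion G H K) (hG : G.IsIndepSet (leaves G))
    (hH : H.IsIndepSet (leaves H)) (hMEG : IsMEGSet G (leaves G)) (hMEH : IsMEGSet H (leaves H))
    (M : Set (α × β)) : IsMEGSet K M ↔ boundary G H ⊆ M := by
  refine ⟨?_, fun hM ↦ (h.isMEGSet_boundary hG hH hMEG hMEH).mono hM⟩
  rintro hM ⟨a, b⟩ (ha | hb)
  · exact h.mem_of_isMEGSet_of_fst_mem_leaves hG hH hM ha b
  · exact h.swap.mem_of_isMEGSet_of_fst_mem_leaves hH hG (hM.preimage_iso (Iso.comap _ K)) hb a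

end IsSideDeletion

theorem isSideDeletion_deleteEdges {S : Set (Sym2 (α × β))}
    (hS : ∀ e ∈ S, ∀ x ∈ e, x ∈ sides G H) : IsSideDeletion G H ((G □ H).deleteEdges S) where
  le := deleteEdges_le S
  adj_of_notMem_sides x y hxy hx :=
    deleteEdges_adj.2 ⟨hxy, fun hmem ↦ hx (hS _ hmem x (Sym2.mem_mk_left x y))⟩

theorem ncard_neighborSet_boxProd [Finite α] [Finite β] (x : α × β) :
    ((G □ H).neighborSet x).ncard = (G.neighborSet x.1).ncard + (H.neighborSet x.2).ncard := by
  rw [neighborSet_boxProd, Set.ncard_union_eq, Set.ncard_prod, Set.ncard_prod,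
    Set.ncard_singleton, Set.ncard_singleton, mul_one, one_mul]
  exact Set.disjoint_prod.2 (.inl (by simp))

theorem mem_sides_of_ncard_neighborSet_eq_three [Finite α] [Finite β]
    (hG : ∀ a, (G.neighborSet a).ncard ≤ 2) (hH : ∀ b, (H.neighborSet b).ncard ≤ 2) {x : α × β}
    (hx : ((G □ H).neighborSet x).ncard = 3) : x ∈ sides G H := by
  rw [ncard_neighborSet_boxProd] at hx
  have hG := hG x.1
  have hH := hH x.2
  simp only [sides, leaves, Set.mem_ofPred_eq, xor_def]
  lia

theorem ncard_boundary_add [Finite α] [Finite β] :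
    (boundary G H).ncard + (leaves G)ᶜ.ncard * (leaves H)ᶜ.ncard = Nat.card α * Nat.card β := by
  have hcompl : (boundary G H)ᶜ = (leaves G)ᶜ ×ˢ (leaves H)ᶜ := by
    ext; simp [boundary]
  rw [← Set.ncard_prod, ← hcompl, Set.ncard_add_ncard_compl, Nat.card_prod]

end BoxProd

section PathGraph

variable {n : ℕ}

theorem ncard_neighborSet_pathGraph (hn : 2 ≤ n) (i : Fin n) :
    ((pathGraph n).neighborSet i).ncard = if i.val = 0 ∨ i.val + 1 = n then 1 else 2 := by
  have hadj (j : Fin n) : j ∈ (pathGraph n).neighborSet i ↔ i.val + 1 = j ∨ j.val + 1 = i :=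
    pathGraph_adj
  split_ifs with hend
  · rw [Set.ncard_eq_one]
    rcases hend with hfirst | hlast
    · refine ⟨⟨1, hn⟩, Set.ext fun j ↦ ?_⟩
      rw [hadj, Set.mem_singleton_iff, Fin.ext_iff]
      lia
    · refine ⟨⟨n - 2, by lia⟩, Set.ext fun j ↦ ?_⟩
      rw [hadj, Set.mem_singleton_iff, Fin.ext_iff]
      lia
  · rw [Set.ncard_eq_two]
    refine ⟨⟨i - 1, by lia⟩, ⟨i + 1, by lia⟩, Fin.ne_of_val_ne (by lia), Set.ext fun j ↦ ?_⟩
    rw [hadj, Set.mem_insert_iff, Set.mem_singleton_iff, Fin.ext_iff, Fin.ext_iff]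
    lia

theorem mem_leaves_pathGraph (hn : 2 ≤ n) {i : Fin n} :
    i ∈ leaves (pathGraph n) ↔ i.val = 0 ∨ i.val + 1 = n := by
  rw [leaves, Set.mem_ofPred_eq, ncard_neighborSet_pathGraph hn]
  split_ifs <;> simp_all

theorem ncard_leaves_pathGraph (hn : 2 ≤ n) : (leaves (pathGraph n)).ncard = 2 := by
  rw [Set.ncard_eq_two]
  refine ⟨⟨0, by lia⟩, ⟨n - 1, by lia⟩, Fin.ne_of_val_ne (by lia), Set.ext fun i ↦ ?_⟩
  rw [mem_leaves_pathGraph hn, Set.mem_insert_iff, Set.mem_singleton_iff, Fin.ext_iff, Fin.ext_iff]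
  lia

theorem isIndepSet_leaves_pathGraph (hn : 3 ≤ n) :
    (pathGraph n).IsIndepSet (leaves (pathGraph n)) := by
  intro i hi j hj _
  rw [mem_leaves_pathGraph (by lia)] at hi hj
  rw [pathGraph_adj]
  lia

theorem monitors_pathGraph {a b i j : Fin n} (ha : a ≤ i) (hij : i.val + 1 = j.val) (hb : j ≤ b) :
    monitors (pathGraph n) a b s(i, j) := by
  refine ⟨pathGraph_preconnected n a b, fun p _ ↦ ?_⟩
  obtain ⟨d, hd, hfst, hsnd⟩ := p.exists_boundary_dart (Set.Iic i) ha
    (by rw [Set.mem_Iic]; lia)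
  have hadj := pathGraph_adj.1 d.adj
  rw [Set.mem_Iic, Fin.le_def] at hfst hsnd
  have hdi : d.fst = i := by lia
  have hdj : d.snd = j := by lia
  rw [← hdi, ← hdj]
  exact List.mem_map_of_mem hd

theorem isMEGSet_leaves_pathGraph (hn : 2 ≤ n) :
    IsMEGSet (pathGraph n) (leaves (pathGraph n)) := by
  let first : Fin n := ⟨0, by lia⟩
  let last : Fin n := ⟨n - 1, by lia⟩
  have hfirst : first ∈ leaves (pathGraph n) := (mem_leaves_pathGraph hn).2 (.inl rfl)
  have hlast : last ∈ leaves (pathGraph n) :=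
    (mem_leaves_pathGraph hn).2 (.inr (Nat.sub_add_cancel (by lia)))
  have hmonitors (i j : Fin n) (hij : i.val + 1 = j.val) :
      monitors (pathGraph n) first last s(i, j) :=
    monitors_pathGraph (Nat.zero_le _) hij (Nat.le_sub_one_of_lt j.isLt)
  rintro ⟨i, j⟩ hadj
  refine ⟨_, hfirst, _, hlast, ?_⟩
  rcases pathGraph_adj.1 hadj with hij | hji
  · exact hmonitors i j hij
  · change monitors _ _ _ s(i, j)
    rw [Sym2.eq_swap]
    exact hmonitors j i hji

theorem ncard_boundary_pathGraph {m n : ℕ} (hm : 2 ≤ m) (hn : 2 ≤ n) :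
    (boundary (pathGraph m) (pathGraph n)).ncard = 2 * (m + n - 2) := by
  have hcard := ncard_boundary_add (G := pathGraph m) (H := pathGraph n)
  rw [Set.ncard_compl, Set.ncard_compl, ncard_leaves_pathGraph hm, ncard_leaves_pathGraph hn,
    Nat.card_fin, Nat.card_fin] at hcard
  obtain ⟨k, rfl⟩ := Nat.exists_eq_add_of_le' hm
  obtain ⟨l, rfl⟩ := Nat.exists_eq_add_of_le' hn
  have hsum : k + 2 + (l + 2) - 2 = k + l + 2 := by lia
  rw [hsum]
  simp only [Nat.add_sub_cancel] at hcard
  linarith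

end PathGraph

theorem grid_deleteEdge_deg3_deg3_general {m n : ℕ} (hm : 3 ≤ m) (hn : 3 ≤ n)
    {S : Set (Sym2 (Fin m × Fin n))}
    (hS : ∀ e ∈ S, ∀ x ∈ e, ((pathGraph m □ pathGraph n).neighborSet x).ncard = 3) :
    meg ((pathGraph m □ pathGraph n).deleteEdges S) = 2 * (m + n - 2) := by
  have hdegree {k : ℕ} (hk : 3 ≤ k) (i : Fin k) : ((pathGraph k).neighborSet i).ncard ≤ 2 := by
    rw [ncard_neighborSet_pathGraph (by lia)]
    split_ifs <;> lia
  have hdel : IsSideDeletion (pathGraph m) (pathGraph n) _ := isSideDeletion_deleteEdges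
    fun e he x hx ↦ mem_sides_of_ncard_neighborSet_eq_three (hdegree hm) (hdegree hn) (hS e he x hx)
  rw [← ncard_boundary_pathGraph (by lia) (by lia)]
  exact meg_eq_ncard_of_forall_isMEGSet_iff <| hdel.isMEGSet_iff
    (isIndepSet_leaves_pathGraph hm) (isIndepSet_leaves_pathGraph hn)
    (isMEGSet_leaves_pathGraph (by lia)) (isMEGSet_leaves_pathGraph (by lia))

/-- In the `m × n` grid (`m, n ≥ 3`), removing an edge both of whose endpoints have
degree `3` does not change `meg`, which equals `2(m + n - 2)`. -/
theorem grid_deleteEdge_deg3_deg3 (m n : ℕ) (hm : 3 ≤ m) (hn : 3 ≤ n)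
    (u v : Fin m × Fin n)
    (huv : ((SimpleGraph.pathGraph m).boxProd (SimpleGraph.pathGraph n)).Adj u v)
    (hu : (((SimpleGraph.pathGraph m).boxProd (SimpleGraph.pathGraph n)).neighborSet u).ncard = 3)
    (hv : (((SimpleGraph.pathGraph m).boxProd (SimpleGraph.pathGraph n)).neighborSet v).ncard = 3) :
    meg (((SimpleGraph.pathGraph m).boxProd (SimpleGraph.pathGraph n)).deleteEdges {s(u, v)})
        = 2 * (m + n - 2) ∧
    meg ((SimpleGraph.pathGraph m).boxProd (SimpleGraph.pathGraph n)) = 2 * (m + n - 2) := by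
  refine ⟨grid_deleteEdge_deg3_deg3_general hm hn ?_, ?_⟩
  · rintro e rfl x hx
    rcases Sym2.mem_iff.1 hx with rfl | rfl <;> assumption
  · simpa using grid_deleteEdge_deg3_deg3_general hm hn (S := ∅) (by simp)
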